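/- Let V be a subspace of a C*-algebra A that is closed under the involution, closed under squaring of self-adjoint elements (a ∈ V self-adjoint implies a² ∈ V), and σ-closed (closed under suprema of bounded monotone increasing sequences that exist in A). Then V is norm-closed. -/

import Mathlib

/-!
By a recursion that uses only squares, `|x|` is the norm limit of an increasing sequence built
from `x`, so the positive and negative parts of each self-adjoint element of `V` lie in `V`. An
absolutely convergent series of self-adjoint elements of `V` is therefore a difference of two
convergent series of nonnegative elements of `V`, whose partial sums increase to elements of `V`.
Hence the self-adjoint part of `V` is complete, and `V` is closed because taking real and
imaginary parts is continuous.
-/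

open Filter Topology ComplexStarModule

section AbsApprox

/-- The iterates `q₀ = 0`, `qₙ₊₁ = qₙ + (x² - qₙ²) / 2`, which increase to `|x|` if `‖x‖ ≤ 1`.
They are defined over any real algebra in order to be evaluated both at scalars and at elements of
a C⋆-algebra. -/
noncomputable def absApprox {B : Type*} [NonUnitalNonAssocRing B] [Module ℝ B] (x : B) : ℕ → B
  | 0 => 0
  | n + 1 => absApprox x n + (2⁻¹ : ℝ) • (x * x - absApprox x n * absApprox x n)

theorem continuous_absApprox {B : Type*} [NonUnitalNonAssocRing B] [Module ℝ B]
    [TopologicalSpace B] [IsTopologicalRing B] [ContinuousConstSMul ℝ B] (n : ℕ) :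
    Continuous fun x : B => absApprox x n := by
  induction n with
  | zero => exact continuous_const
  | succ n ih => simp only [absApprox]; fun_prop

theorem absApprox_zero_left {B : Type*} [NonUnitalNonAssocRing B] [Module ℝ B] (n : ℕ) :
    absApprox (0 : B) n = 0 := by
  induction n with
  | zero => rfl
  | succ n ih => simp [absApprox, ih]

theorem isSelfAdjoint_absApprox {B : Type*} [NonUnitalNonAssocRing B] [StarRing B] [Module ℝ B]
    [StarModule ℝ B] {x : B} (hx : IsSelfAdjoint x) (n : ℕ) : IsSelfAdjoint (absApprox x n) := by
  induction n with
  | zero => exact .zero B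
  | succ n ih => simp [IsSelfAdjoint, absApprox, star_mul, hx.star_eq, ih.star_eq]

theorem abs_sub_absApprox_succ (t : ℝ) (n : ℕ) :
    |t| - absApprox t (n + 1) = (|t| - absApprox t n) * (1 - (|t| + absApprox t n) / 2) := by
  rw [absApprox, smul_eq_mul, ← abs_mul_abs_self t]
  ring

theorem absApprox_le_absApprox_succ {t : ℝ} {n : ℕ} (h : absApprox t n ∈ Set.Icc 0 |t|) :
    absApprox t n ≤ absApprox t (n + 1) := by
  have h_sq : absApprox t n * absApprox t n ≤ t * t := by
    rw [← abs_mul_abs_self t]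
    exact mul_self_le_mul_self h.1 h.2
  rw [absApprox, smul_eq_mul]
  linarith

theorem absApprox_mem_Icc {t : ℝ} (ht : |t| ≤ 1) (n : ℕ) : absApprox t n ∈ Set.Icc 0 |t| := by
  induction n with
  | zero => exact ⟨le_rfl, abs_nonneg t⟩
  | succ n ih =>
    refine ⟨ih.1.trans (absApprox_le_absApprox_succ ih), ?_⟩
    rw [← sub_nonneg, abs_sub_absApprox_succ]
    exact mul_nonneg (sub_nonneg.2 ih.2) (by linarith [ih.2])

theorem monotone_absApprox {t : ℝ} (ht : |t| ≤ 1) : Monotone (absApprox t) :=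
  monotone_nat_of_le_succ fun n => absApprox_le_absApprox_succ (absApprox_mem_Icc ht n)

theorem abs_sub_absApprox_le {t : ℝ} (ht : |t| ≤ 1) (n : ℕ) :
    |t| - absApprox t n ≤ 2 / (n + 2) := by
  induction n with
  | zero => simpa [absApprox] using ht
  | succ n ih =>
    obtain ⟨h_nonneg, h_le⟩ := absApprox_mem_Icc ht n
    set e := |t| - absApprox t n
    have h_rate : 2 / ((n : ℝ) + 2) ≤ 1 := (div_le_one (by positivity)).2 (by simp)
    calc |t| - absApprox t (n + 1)
        = e * (1 - (|t| + absApprox t n) / 2) := abs_sub_absApprox_succ t n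
      _ ≤ e * (1 - e / 2) := by gcongr; all_goals linarith
      _ ≤ 2 / (n + 2) * (1 - 2 / (n + 2) / 2) := by nlinarith
      _ = 2 * (n + 1) / ((n + 2) * (n + 2)) := by field_simp; ring
      _ ≤ 2 / ((n + 1 : ℕ) + 2) := by
        push_cast
        rw [div_le_div_iff₀ (by positivity) (by positivity)]
        nlinarith

theorem tendstoUniformlyOn_absApprox :
    TendstoUniformlyOn (fun n t => absApprox t n) (fun t : ℝ => |t|) atTop {t | |t| ≤ 1} := by
  have h_rate : Tendsto (fun n : ℕ => 2 / ((n : ℝ) + 2)) atTop (𝓝 0) :=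
    tendsto_const_nhds.div_atTop
      (tendsto_atTop_add_const_right _ _ tendsto_natCast_atTop_atTop)
  refine Metric.tendstoUniformlyOn_iff.2 fun ε hε => ?_
  filter_upwards [h_rate.eventually_lt_const hε] with n hn t ht
  rw [Real.dist_eq, abs_of_nonneg (sub_nonneg.2 (absApprox_mem_Icc ht n).2)]
  exact (abs_sub_absApprox_le ht n).trans_lt hn

theorem cfcₙ_absApprox {A : Type*} [NonUnitalRing A] [StarRing A] [TopologicalSpace A] [Module ℝ A]
    [IsScalarTower ℝ A A] [SMulCommClass ℝ A A]
    [NonUnitalContinuousFunctionalCalculus ℝ A IsSelfAdjoint] {x : A} (hx : IsSelfAdjoint x)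
    (n : ℕ) : cfcₙ (fun t : ℝ => absApprox t n) x = absApprox x n := by
  induction n with
  | zero => exact cfcₙ_const_zero ℝ x
  | succ n ih =>
    have h_cont : Continuous fun t : ℝ => absApprox t n := continuous_absApprox n
    have h_zero : absApprox (0 : ℝ) n = 0 := absApprox_zero_left n
    simp only [absApprox]
    rw [cfcₙ_add .., cfcₙ_smul .., cfcₙ_sub .., cfcₙ_mul .., cfcₙ_mul .., cfcₙ_id' ℝ x, ih]

end AbsApprox

/-- Closure under squaring of self-adjoint elements: for linear subspaces, closure of the
self-adjoint part under the Jordan product. -/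
def IsSquareClosed {A : Type*} [Mul A] [Star A] (s : Set A) : Prop :=
  ∀ a ∈ s, IsSelfAdjoint a → a * a ∈ s

/-- Closure under norm limits of increasing sequences of self-adjoint elements, the part of
σ-closedness needed for closedness in norm. -/
def IsMonotoneLimitClosed {A : Type*} [Star A] [Preorder A] [TopologicalSpace A] (s : Set A) :
    Prop :=
  ∀ (f : ℕ → A) (a : A), (∀ n, f n ∈ s) → (∀ n, IsSelfAdjoint (f n)) → Monotone f →
    Tendsto f atTop (𝓝 a) → a ∈ s

theorem IsMonotoneLimitClosed.of_isLUB_mem {A : Type*} [SeminormedAddCommGroup A] [Star A]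
    [Preorder A] [OrderClosedTopology A] {s : Set A}
    (hs : ∀ (f : ℕ → A) (a : A), (∀ n, f n ∈ s) → (∀ n, IsSelfAdjoint (f n)) →
      Monotone f → (∃ c : ℝ, ∀ n, ‖f n‖ ≤ c) → IsLUB (Set.range f) a → a ∈ s) :
    IsMonotoneLimitClosed s := by
  intro f a hf hsa h_mono h_tendsto
  obtain ⟨c, hc⟩ := h_tendsto.norm.bddAbove_range
  exact hs f a hf hsa h_mono ⟨c, fun n => hc ⟨n, rfl⟩⟩ (isLUB_of_tendsto_atTop h_mono h_tendsto)

theorem IsMonotoneLimitClosed.tsum_mem_of_nonneg {A S : Type*} [NonUnitalRing A] [StarRing A]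
    [PartialOrder A] [StarOrderedRing A] [TopologicalSpace A] [SetLike S A]
    [AddSubmonoidClass S A] {V : S} (hlim : IsMonotoneLimitClosed (V : Set A)) {p : ℕ → A}
    (hp : ∀ n, p n ∈ V) (h_nonneg : ∀ n, 0 ≤ p n) (h_sum : Summable p) : ∑' n, p n ∈ V :=
  hlim (fun n => ∑ k ∈ Finset.range n, p k) _ (fun _ => sum_mem fun k _ => hp k)
    (fun _ => .of_nonneg (Finset.sum_nonneg fun k _ => h_nonneg k))
    (monotone_nat_of_le_succ fun n => by
      simpa only [Finset.sum_range_succ] using le_add_of_nonneg_right (h_nonneg n))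
    h_sum.hasSum.tendsto_sum_nat

theorem IsSquareClosed.absApprox_mem {A : Type*} [NonUnitalNonAssocRing A] [StarRing A]
    [Module ℝ A] [StarModule ℝ A] {V : Submodule ℝ A} (hsq : IsSquareClosed (V : Set A)) {x : A}
    (hx : x ∈ V) (hsa : IsSelfAdjoint x) (n : ℕ) : absApprox x n ∈ V := by
  induction n with
  | zero => exact V.zero_mem
  | succ n ih =>
    exact V.add_mem ih (V.smul_mem _ (V.sub_mem (hsq x hx hsa)
      (hsq _ ih (isSelfAdjoint_absApprox hsa n))))

section CStarAlgebra

variable {A : Type*} [NonUnitalCStarAlgebra A]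

theorem abs_le_one_of_mem_quasispectrum {x : A} (hx : IsSelfAdjoint x) (h_norm : ‖x‖ ≤ 1) {t : ℝ}
    (ht : t ∈ quasispectrum ℝ x) : |t| ≤ 1 :=
  (NonUnitalIsometricContinuousFunctionalCalculus.norm_quasispectrum_le x ht).trans h_norm

variable [PartialOrder A] [StarOrderedRing A]

theorem tendsto_absApprox {x : A} (hx : IsSelfAdjoint x) (h_norm : ‖x‖ ≤ 1) :
    Tendsto (absApprox x) atTop (𝓝 (CFC.abs x)) := by
  have h_unif := tendstoUniformlyOn_absApprox.mono fun _ =>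
    abs_le_one_of_mem_quasispectrum hx h_norm
  have h_tendsto := tendsto_cfcₙ_fun h_unif
    (.of_forall fun n => (continuous_absApprox n).continuousOn) (.of_forall absApprox_zero_left)
  rw [CFC.abs_eq_cfcₙ_norm x]
  simp only [cfcₙ_absApprox hx] at h_tendsto
  exact h_tendsto

theorem monotone_absApprox_of_isSelfAdjoint {x : A} (hx : IsSelfAdjoint x) (h_norm : ‖x‖ ≤ 1) :
    Monotone (absApprox x) := fun m n hmn => by
  rw [← cfcₙ_absApprox hx, ← cfcₙ_absApprox hx]
  exact cfcₙ_mono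
    (fun t ht => monotone_absApprox (abs_le_one_of_mem_quasispectrum hx h_norm ht) hmn)
    (continuous_absApprox m).continuousOn (continuous_absApprox n).continuousOn
    (absApprox_zero_left m) (absApprox_zero_left n)

namespace IsSquareClosed

variable {V : Submodule ℝ A}

theorem abs_mem_of_norm_le_one (hsq : IsSquareClosed (V : Set A))
    (hlim : IsMonotoneLimitClosed (V : Set A)) {x : A} (hx : x ∈ V)
    (hsa : IsSelfAdjoint x) (h_norm : ‖x‖ ≤ 1) : CFC.abs x ∈ V :=
  hlim (absApprox x) _ (hsq.absApprox_mem hx hsa) (isSelfAdjoint_absApprox hsa)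
    (monotone_absApprox_of_isSelfAdjoint hsa h_norm) (tendsto_absApprox hsa h_norm)

theorem abs_mem (hsq : IsSquareClosed (V : Set A)) (hlim : IsMonotoneLimitClosed (V : Set A))
    {x : A} (hx : x ∈ V) (hsa : IsSelfAdjoint x) : CFC.abs x ∈ V := by
  obtain rfl | hx0 := eq_or_ne x 0
  · simp
  have h_norm : ‖‖x‖⁻¹ • x‖ ≤ 1 := by simp [norm_smul, hx0]
  have h_mem := hsq.abs_mem_of_norm_le_one hlim (V.smul_mem ‖x‖⁻¹ hx)
    ((IsSelfAdjoint.all _).smul hsa) h_norm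
  rw [CFC.abs_smul] at h_mem
  exact (V.smul_mem_iff (by simpa using hx0)).1 h_mem

theorem posPart_mem (hsq : IsSquareClosed (V : Set A)) (hlim : IsMonotoneLimitClosed (V : Set A))
    {x : A} (hx : x ∈ V) (hsa : IsSelfAdjoint x) : x⁺ ∈ V := by
  have h_two : (2 : ℝ) • x⁺ ∈ V := by
    rw [ofNat_smul_eq_nsmul, ← CFC.abs_add_self x]
    exact V.add_mem (hsq.abs_mem hlim hx hsa) hx
  exact (V.smul_mem_iff two_ne_zero).1 h_two

theorem negPart_mem (hsq : IsSquareClosed (V : Set A)) (hlim : IsMonotoneLimitClosed (V : Set A))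
    {x : A} (hx : x ∈ V) (hsa : IsSelfAdjoint x) : x⁻ ∈ V :=
  CFC.posPart_neg x ▸ hsq.posPart_mem hlim (V.neg_mem hx) hsa.neg

theorem tsum_mem_of_summable_norm (hsq : IsSquareClosed (V : Set A))
    (hlim : IsMonotoneLimitClosed (V : Set A)) {u : ℕ → A} (hu : ∀ n, u n ∈ V)
    (hsa : ∀ n, IsSelfAdjoint (u n)) (h_sum : Summable (‖u ·‖)) : ∑' n, u n ∈ V := by
  have h_pos : Summable fun n => (u n)⁺ :=
    .of_norm_bounded h_sum fun n => CStarAlgebra.norm_posPart_le (u n)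
  have h_neg : Summable fun n => (u n)⁻ :=
    .of_norm_bounded h_sum fun n => CStarAlgebra.norm_negPart_le (u n)
  have h_split : ∑' n, u n = ∑' n, (u n)⁺ - ∑' n, (u n)⁻ := by
    rw [← h_pos.tsum_sub h_neg]
    exact tsum_congr fun n => (CFC.posPart_sub_negPart (u n) (hsa n)).symm
  rw [h_split]
  exact V.sub_mem
    (hlim.tsum_mem_of_nonneg (fun n => hsq.posPart_mem hlim (hu n) (hsa n))
      (fun n => CFC.posPart_nonneg (u n)) h_pos)
    (hlim.tsum_mem_of_nonneg (fun n => hsq.negPart_mem hlim (hu n) (hsa n))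
      (fun n => CFC.negPart_nonneg (u n)) h_neg)

theorem isClosed_inf_selfAdjoint (hsq : IsSquareClosed (V : Set A))
    (hlim : IsMonotoneLimitClosed (V : Set A)) :
    IsClosed ((V ⊓ selfAdjoint.submodule ℝ A : Submodule ℝ A) : Set A) := by
  set W := V ⊓ selfAdjoint.submodule ℝ A
  suffices CompleteSpace W from (completeSpace_coe_iff_isComplete.1 this).isClosed
  refine NormedAddCommGroup.completeSpace_of_summable_imp_tendsto fun u h_norm => ?_
  have h_sum : Summable fun n => (u n : A) := .of_norm h_norm
  have h_tsum_sa : IsSelfAdjoint (∑' n, (u n : A)) := by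
    rw [isSelfAdjoint_iff, tsum_star]
    exact tsum_congr fun n => (u n).2.2
  have h_mem : ∑' n, (u n : A) ∈ W :=
    ⟨hsq.tsum_mem_of_summable_norm hlim (fun n => (u n).2.1) (fun n => (u n).2.2) h_norm,
      h_tsum_sa⟩
  refine ⟨⟨_, h_mem⟩, tendsto_subtype_rng.2 ?_⟩
  simpa using h_sum.hasSum.tendsto_sum_nat

end IsSquareClosed

end CStarAlgebra

section RealImaginaryPart

variable {A : Type*} [AddCommGroup A] [Module ℂ A] [StarAddMonoid A] [StarModule ℂ A]

theorem realPart_mem {V : Submodule ℂ A} (hstar : ∀ a ∈ V, star a ∈ V) {a : A} (ha : a ∈ V) :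
    (ℜ a : A) ∈ V := by
  rw [realPart_apply_coe]
  exact V.smul_of_tower_mem _ (V.add_mem ha (hstar a ha))

theorem imaginaryPart_mem {V : Submodule ℂ A} (hstar : ∀ a ∈ V, star a ∈ V) {a : A} (ha : a ∈ V) :
    (ℑ a : A) ∈ V := by
  rw [imaginaryPart_apply_coe]
  exact V.smul_mem _ (V.smul_of_tower_mem _ (V.sub_mem ha (hstar a ha)))

theorem mem_iff_realPart_mem_and_imaginaryPart_mem {V : Submodule ℂ A}
    (hstar : ∀ a ∈ V, star a ∈ V) {a : A} : a ∈ V ↔ (ℜ a : A) ∈ V ∧ (ℑ a : A) ∈ V := by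
  refine ⟨fun ha => ⟨realPart_mem hstar ha, imaginaryPart_mem hstar ha⟩, fun ⟨h_re, h_im⟩ => ?_⟩
  rw [← realPart_add_I_smul_imaginaryPart a]
  exact V.add_mem h_re (V.smul_mem _ h_im)

variable [TopologicalSpace A] [IsTopologicalAddGroup A] [ContinuousConstSMul ℂ A] [ContinuousStar A]

theorem continuous_coe_realPart : Continuous fun a : A => (ℜ a : A) := by
  simp only [realPart_apply_coe, ← Complex.coe_smul]
  fun_prop

theorem continuous_coe_imaginaryPart : Continuous fun a : A => (ℑ a : A) := by
  simp only [imaginaryPart_apply_coe, ← Complex.coe_smul]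
  fun_prop

theorem isClosed_of_isClosed_inf_selfAdjoint {V : Submodule ℂ A} (hstar : ∀ a ∈ V, star a ∈ V)
    (h_closed : IsClosed
      ((V.restrictScalars ℝ ⊓ selfAdjoint.submodule ℝ A : Submodule ℝ A) : Set A)) :
    IsClosed (V : Set A) := by
  have h_preimage : (V : Set A) =
      {a | (ℜ a : A) ∈ V.restrictScalars ℝ ⊓ selfAdjoint.submodule ℝ A} ∩
        {a | (ℑ a : A) ∈ V.restrictScalars ℝ ⊓ selfAdjoint.submodule ℝ A} := by
    ext a
    exact (mem_iff_realPart_mem_and_imaginaryPart_mem hstar).trans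
      (and_congr (and_iff_left (ℜ a).2).symm (and_iff_left (ℑ a).2).symm)
  rw [h_preimage]
  exact (h_closed.preimage continuous_coe_realPart).inter
    (h_closed.preimage continuous_coe_imaginaryPart)

end RealImaginaryPart

theorem stmt13_general {A : Type*} [NonUnitalCStarAlgebra A] [PartialOrder A] [StarOrderedRing A]
    (V : Submodule ℂ A) (hstar : ∀ a ∈ V, star a ∈ V) (hsq : IsSquareClosed (V : Set A))
    (hlim : IsMonotoneLimitClosed (V : Set A)) : IsClosed (V : Set A) :=
  isClosed_of_isClosed_inf_selfAdjoint hstar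
    (IsSquareClosed.isClosed_inf_selfAdjoint (V := V.restrictScalars ℝ) hsq hlim)

/-- A *-subspace of a C*-algebra that is closed under squaring self-adjoint elements
and σ-closed (closed under existing suprema of bounded monotone increasing sequences
of its self-adjoint elements) is norm-closed. -/
theorem stmt13 {A : Type*} [CStarAlgebra A] [PartialOrder A] [StarOrderedRing A]
    (V : Submodule ℂ A) (hstar : ∀ a ∈ V, star a ∈ V)
    (hsq : ∀ a ∈ V, IsSelfAdjoint a → a * a ∈ V)
    (hσ : ∀ (f : ℕ → A) (a : A), (∀ n, f n ∈ V) → (∀ n, IsSelfAdjoint (f n)) →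
      Monotone f → (∃ c : ℝ, ∀ n, ‖f n‖ ≤ c) → IsLUB (Set.range f) a → a ∈ V) :
    IsClosed (V : Set A) :=
  stmt13_general V hstar hsq (.of_isLUB_mem hσ)
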